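/- arXiv:1203.2001 — 2 statements merged into one kernel-verified Lean document; each statement's English description precedes it below -/
import Mathlib

section
/- (First derivative of the weight function for the Hilbert metric.) Let n ≥ 2, write ℝⁿ = ℝ^{n−1} × ℝ, and let D ⊆ ℝⁿ be a nonempty bounded convex open set with 0 ∈ D. Let U ⊆ ℝ^{n−1} be an open neighborhood of 0 and h, b : U → ℝ be twice continuously differentiable such that for every z ∈ U the points (z, h(z)) and (z, b(z)) lie in the frontier of D, and b(z) < t < h(z) whenever (z,t) ∈ D; so h(0) > 0 > b(0). Assume the normalization ∂ᵢh(0)/h(0) = ∂ᵢb(0)/b(0) for every i ∈ {1,…,n−1}. Define F_H(x,v) := (gauge (D − x) v + gauge (D − x) (−v))/2, let eₙ := (0,1), assume F_H is three times continuously differentiable on a neighborhood of ((0,t), eₙ) for t near 0 in ℝⁿ × ℝⁿ, and let G(t) be the n×n matrix with entries G(t)ᵢⱼ := (1/2)·∂²(F_H²)/∂vⁱ∂vʲ((0,t), eₙ); assume G(t) is positive definite for t near 0. Then Ψ(t) := (1/2)·log(det G(t)) is differentiable at 0 with Ψ'(0) = ((n+1)/2)·(1/h(0) + 1/b(0)).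 -/
/-!
Fix `t` with `(0, t) ∈ D` and let `R` be the gauge of `D - (0, t)`. For `v` near `e = (0, 1)` the
ray from `(0, t)` in direction `v` leaves `D` through the graph of `h` at a time `τ v`, so
`R v = 1 / τ v` where `τ` solves the implicit equation `h (τ v • v.1) - τ v * v.2 = t`. The
implicit function theorem makes `τ` of class `C²` (`exists_hitting_time`), and differentiating the
equation twice (`inv_hitting_time_derivs`) gives
`R e = DR(e) e = 1 / (h 0 - t)` and `D²R(e)(u, w) = -D²h(0)(u.1, w.1)`.
The decisive point is that this Hessian does not depend on `t`. The backward gauge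
`v ↦ gauge (D - (0, t)) (-v)` is the forward gauge of the reflected body `-D` at `(0, -t)`, whose
upper boundary is the graph of `z ↦ -b (-z)`, so the same result covers it.

Hence `F = FH (0, t)` has `F e = DF(e) e = f t := (1 / (h 0 - t) + 1 / (t - b 0)) / 2`, and
`G t = f t • K + d dᵀ` with `d = DF(e)` and a constant matrix `K` whose last row and column vanish.
Since the last entry of `d` is `f t`, a congruence by a unipotent matrix removes the off-diagonal
part of the last row and column, and `det (G t) = (f t) ^ (n + 1) * k` with `k` independent of `t`
(`det_rank_one_update`). Thus `Ψ = ((n + 1) / 2) log f + const` near `0`, and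
`f' 0 / f 0 = 1 / h 0 + 1 / b 0`.
-/

open Topology Filter

/-- The `i`-th standard coordinate vector of `ℝⁿ = ℝ^{n−1} × ℝ`; for `i = n` (the last
index) this is `eₙ = (0, 1)`. -/
noncomputable def coordVec (n : ℕ) (i : Fin n) : EuclideanSpace ℝ (Fin (n - 1)) × ℝ :=
  if h : (i : ℕ) < n - 1 then (EuclideanSpace.single (⟨(i : ℕ), h⟩ : Fin (n - 1)) 1, 0)
  else (0, 1)

/-! ### The gauge near the vertical direction -/

section

variable {E : Type*} [NormedAddCommGroup E] [NormedSpace ℝ E]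

/-- If the ray from `(0, t)` in direction `v` meets the frontier of `D` at time `τ`, then the gauge
of `D - (0, t)` at `v` is `1 / τ`. -/
lemma gauge_translate_eq_inv {D : Set (E × ℝ)} (hconv : Convex ℝ D) (hopen : IsOpen D)
    {t : ℝ} (ht : ((0 : E), t) ∈ D) {v : E × ℝ} {z : E} {y τ : ℝ} (hτ : 0 < τ)
    (hz : (z, y) ∈ frontier D) (h1 : τ • v.1 = z) (h2 : t + τ * v.2 = y) :
    gauge ((· - ((0 : E), t)) '' D) v = τ⁻¹ := by
  set x : E × ℝ := (0, t)
  have himg : (· - x) '' D = (Homeomorph.subRight x) '' D := rfl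
  have hc : Convex ℝ ((· - x) '' D) := by
    have : (· - x) '' D = (fun y => -x + y) '' D := by
      simp only [sub_eq_add_neg, add_comm]
    rw [this]
    exact hconv.translate (-x)
  have hn : (· - x) '' D ∈ 𝓝 (0 : E × ℝ) := by
    rw [himg]
    exact ((Homeomorph.subRight x).isOpenMap D hopen).mem_nhds ⟨x, ht, by simp⟩
  have hf : τ • v ∈ frontier ((· - x) '' D) := by
    rw [himg, ← Homeomorph.image_frontier]
    refine ⟨_, hz, ?_⟩
    ext <;> simp [x, ← h1, ← h2]
  have := (gauge_eq_one_iff_mem_frontier hc hn).2 hf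
  rw [gauge_smul_of_nonneg hτ.le, smul_eq_mul] at this
  exact eq_inv_of_mul_eq_one_right this

/-- A `C²` function `τ` near `e = (0, 1)` such that the ray from `(0, t)` in direction `v` meets the
graph of `h` at time `τ v`. -/
lemma exists_hitting_time [CompleteSpace E] {h : E → ℝ} (hh : ContDiffAt ℝ 2 h 0) {t : ℝ} :
    ∃ τ : E × ℝ → ℝ, ContDiffAt ℝ 2 τ (0, 1) ∧ τ (0, 1) = h 0 - t ∧
      ∀ᶠ v in 𝓝 ((0 : E), (1 : ℝ)), h (τ v • v.1) - τ v * v.2 = t := by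
  set u : (E × ℝ) × ℝ := ((0, 1), h 0 - t)
  set f : (E × ℝ) × ℝ → ℝ := fun p => h (p.2 • p.1.1) - p.2 * p.1.2
  have hfu : f u = t := by simp [f, u]
  have hcd : ContDiffAt ℝ 2 f u := by
    have h1 : ContDiffAt ℝ 2 (fun p : (E × ℝ) × ℝ => p.2 • p.1.1) u := by fun_prop
    have h2 : ContDiffAt ℝ 2 (fun p : (E × ℝ) × ℝ => h (p.2 • p.1.1)) u :=
      ContDiffAt.comp (g := h) u (by simpa [u] using hh) h1
    have h3 : ContDiffAt ℝ 2 (fun p : (E × ℝ) × ℝ => p.2 * p.1.2) u := by fun_prop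
    exact h2.sub h3
  have hpartial : fderiv ℝ f u ∘L .inr ℝ (E × ℝ) ℝ = -ContinuousLinearMap.id ℝ ℝ := by
    have hd : HasFDerivAt (fun s : ℝ => f ((0, 1), s))
        (fderiv ℝ f u ∘L .inr ℝ (E × ℝ) ℝ) (h 0 - t) :=
      HasFDerivAt.comp (g := f) (h 0 - t) (hcd.differentiableAt two_ne_zero).hasFDerivAt
        (hasFDerivAt_prodMk_right ((0 : E), (1 : ℝ)) (h 0 - t))
    refine hd.unique ?_
    have : (fun s : ℝ => f ((0, 1), s)) = fun s => h 0 - s := by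
      funext s; simp [f]
    rw [this]
    exact (hasFDerivAt_id (𝕜 := ℝ) (h 0 - t)).const_sub (h 0)
  have hinv : (fderiv ℝ f u ∘L .inr ℝ (E × ℝ) ℝ).IsInvertible := by
    rw [hpartial]
    exact ⟨ContinuousLinearEquiv.neg ℝ, by ext; simp⟩
  refine ⟨hcd.implicitFunction two_ne_zero hinv, hcd.contDiffAt_implicitFunction two_ne_zero hinv,
    hcd.implicitFunction_apply_self two_ne_zero hinv, ?_⟩
  have := hcd.eventually_apply_implicitFunction two_ne_zero hinv
  rw [hfu] at this
  exact this

/-- Derivatives at `e = (0, 1)` of the reciprocal `1 / τ` of the hitting time of the graph of `h`.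
The Hessian is that of `-h` at `0` and does not involve the height `t` of the starting point. -/
lemma inv_hitting_time_derivs {h : E → ℝ} (hh : ContDiffAt ℝ 2 h 0) {t : ℝ} (htop : t < h 0)
    {τ : E × ℝ → ℝ} (hτ : ContDiffAt ℝ 2 τ (0, 1)) (hτ0 : τ (0, 1) = h 0 - t)
    (heq : ∀ᶠ v in 𝓝 ((0 : E), (1 : ℝ)), h (τ v • v.1) - τ v * v.2 = t) :
    fderiv ℝ (fun v => (τ v)⁻¹) (0, 1) (0, 1) = (h 0 - t)⁻¹ ∧
    ∀ u w, fderiv ℝ (fderiv ℝ (fun v => (τ v)⁻¹)) (0, 1) u w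
      = - fderiv ℝ (fderiv ℝ h) 0 u.1 w.1 := by
  set e : E × ℝ := (0, 1) with he
  have hc : 0 < h 0 - t := sub_pos.2 htop
  have hτe : τ e ≠ 0 := by rw [hτ0]; exact hc.ne'
  have hτc : ContinuousAt τ e := hτ.continuousAt
  have hzc : ContinuousAt (fun v : E × ℝ => τ v • v.1) e := by fun_prop
  have hz0 : τ e • e.1 = 0 := by simp [he]
  have hdh : ∀ᶠ v in 𝓝 e, DifferentiableAt ℝ h (τ v • v.1) := by
    have : ∀ᶠ z in 𝓝 (0 : E), DifferentiableAt ℝ h z := by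
      filter_upwards [hh.eventually (by simp)] with z hz using hz.differentiableAt two_ne_zero
    rw [← hz0] at this
    exact hzc.eventually this
  have hdτ : ∀ᶠ v in 𝓝 e, DifferentiableAt ℝ τ v := by
    filter_upwards [hτ.eventually (by simp)] with z hz using hz.differentiableAt two_ne_zero
  have hh' : DifferentiableAt ℝ (fderiv ℝ h) 0 :=
    (hh.fderiv_right (m := 1) (by norm_num)).differentiableAt one_ne_zero
  have hτ' := hτ.differentiableAt two_ne_zero
  have hDτ : ∀ᶠ v in 𝓝 e, ∀ w : E × ℝ, fderiv ℝ τ v w * (v.2 - fderiv ℝ h (τ v • v.1) v.1)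
      = τ v * (fderiv ℝ h (τ v • v.1) w.1 - w.2) := by
    filter_upwards [hdh, hdτ, heq.eventually_nhds] with v hv1 hv2 hv3 w
    have h1 : HasFDerivAt (fun v : E × ℝ => τ v • v.1) _ v :=
      hv2.hasFDerivAt.smul hasFDerivAt_fst
    have h2 := HasFDerivAt.comp (g := h) v hv1.hasFDerivAt h1
    have h3 : HasFDerivAt (fun v : E × ℝ => τ v * v.2) _ v := hv2.hasFDerivAt.mul hasFDerivAt_snd
    have h4 := (h2.sub h3).unique
      ((hasFDerivAt_const t v).congr_of_eventuallyEq hv3)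
    have h5 := congrArg (fun L : E × ℝ →L[ℝ] ℝ => L w) h4
    simp at h5
    linarith
  -- `D(1/τ)(v) w = (w.2 - Dh(z) w.1) / M v` with `z = τ v • v.1`. The derivative of `M` vanishes
  -- at `e`, so only the numerator contributes to the Hessian.
  set M : E × ℝ → ℝ := fun v => τ v * (v.2 - fderiv ℝ h (τ v • v.1) v.1) with hM
  have hMe : M e = h 0 - t := by simp [hM, ← hτ0, he]
  have hP : HasFDerivAt (fun v : E × ℝ => fderiv ℝ h (τ v • v.1))
      ((fderiv ℝ (fderiv ℝ h) 0).comp (τ e • ContinuousLinearMap.fst ℝ E ℝ)) e := by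
    have h1 : HasFDerivAt (fun v : E × ℝ => τ v • v.1) (τ e • ContinuousLinearMap.fst ℝ E ℝ) e := by
      refine (hτ'.hasFDerivAt.smul hasFDerivAt_fst).congr_fderiv ?_
      ext <;> simp [he]
    refine HasFDerivAt.comp (g := fderiv ℝ h) e ?_ h1
    rw [hz0]; exact hh'.hasFDerivAt
  have hMd : HasFDerivAt M (0 : E × ℝ →L[ℝ] ℝ) e := by
    have h1 : HasFDerivAt (fun v : E × ℝ => fderiv ℝ h (τ v • v.1) v.1) _ e :=
      hP.clm_apply hasFDerivAt_fst
    have h2 : HasFDerivAt (fun v : E × ℝ => v.2 - fderiv ℝ h (τ v • v.1) v.1) _ e :=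
      hasFDerivAt_snd.sub h1
    refine (hτ'.hasFDerivAt.mul h2).congr_fderiv ?_
    refine ContinuousLinearMap.ext fun w => ?_
    have := hDτ.self_of_nhds w
    simp [he] at this ⊢
    linarith
  have hMne : ∀ᶠ v in 𝓝 e, M v ≠ 0 :=
    hMd.continuousAt.eventually_ne (by rw [hMe]; exact hc.ne')
  have hDR : ∀ᶠ v in 𝓝 e, ∀ w : E × ℝ, fderiv ℝ (fun v => (τ v)⁻¹) v w
      = (w.2 - fderiv ℝ h (τ v • v.1) w.1) * (M v)⁻¹ := by
    filter_upwards [hdτ, hDτ, hMne, hτc.eventually_ne hτe] with v hv1 hv2 hv3 hv4 w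
    have h1 : HasFDerivAt (fun v => (τ v)⁻¹) _ v :=
      (hasDerivAt_inv hv4).comp_hasFDerivAt v hv1.hasFDerivAt
    rw [h1.fderiv]
    have h2 := hv2 w
    have h3 : v.2 - fderiv ℝ h (τ v • v.1) v.1 ≠ 0 := fun h0 => hv3 (by simp [hM, h0])
    simp only [hM]
    simp only [smul_apply, smul_eq_mul]
    field_simp
    linear_combination -h2
  refine ⟨?_, fun u w => ?_⟩
  · rw [hDR.self_of_nhds e, hMe]; simp [he]
  · have hR2 : DifferentiableAt ℝ (fderiv ℝ (fun v => (τ v)⁻¹)) e :=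
      ((hτ.inv hτe).fderiv_right (m := 1) (by norm_num)).differentiableAt one_ne_zero
    have h1 : HasFDerivAt (fun v => fderiv ℝ (fun v => (τ v)⁻¹) v w) _ e :=
      hR2.hasFDerivAt.clm_apply (hasFDerivAt_const w e)
    have h2 : HasFDerivAt (fun v : E × ℝ => fderiv ℝ h (τ v • v.1) w.1) _ e :=
      hP.clm_apply (hasFDerivAt_const w.1 e)
    have h3 : HasFDerivAt (fun v : E × ℝ => (M v)⁻¹) _ e :=
      (hasDerivAt_inv (by rw [hMe]; exact hc.ne')).comp_hasFDerivAt e hMd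
    have h4 := (h2.const_sub w.2).mul h3
    have h5 := h1.unique (h4.congr_of_eventuallyEq (hDR.mono fun v hv => hv w))
    have h6 := congrArg (fun L : E × ℝ →L[ℝ] ℝ => L u) h5
    simp [hMe, hτ0] at h6
    rw [h6]
    field_simp

/-- The second-order jet at `e = (0, 1)` of the gauge of `D - (0, t)`, for a convex body whose upper
boundary is locally the graph of `h`. -/
lemma gauge_second_order [CompleteSpace E] {D : Set (E × ℝ)} (hconv : Convex ℝ D)
    (hopen : IsOpen D) {h : E → ℝ} (hh : ContDiffAt ℝ 2 h 0)
    (hgraph : ∀ᶠ z in 𝓝 (0 : E), (z, h z) ∈ frontier D)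
    {t : ℝ} (ht : ((0 : E), t) ∈ D) (htop : t < h 0) :
    ContDiffAt ℝ 2 (gauge ((· - ((0 : E), t)) '' D)) (0, 1) ∧
    gauge ((· - ((0 : E), t)) '' D) (0, 1) = (h 0 - t)⁻¹ ∧
    fderiv ℝ (gauge ((· - ((0 : E), t)) '' D)) (0, 1) (0, 1) = (h 0 - t)⁻¹ ∧
    ∀ u w, fderiv ℝ (fderiv ℝ (gauge ((· - ((0 : E), t)) '' D))) (0, 1) u w
      = - fderiv ℝ (fderiv ℝ h) 0 u.1 w.1 := by
  obtain ⟨τ, hτ, hτ0, heq⟩ := exists_hitting_time hh (t := t)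
  have hc : 0 < h 0 - t := sub_pos.2 htop
  have hτc : ContinuousAt τ (0, 1) := hτ.continuousAt
  have hzc : ContinuousAt (fun v : E × ℝ => τ v • v.1) (0, 1) := by fun_prop
  have hev : gauge ((· - ((0 : E), t)) '' D) =ᶠ[𝓝 (0, 1)] fun v => (τ v)⁻¹ := by
    have h1 : ∀ᶠ v in 𝓝 ((0 : E), (1 : ℝ)), 0 < τ v :=
      hτc.eventually (lt_mem_nhds (by rwa [hτ0]))
    have h2 : ∀ᶠ v in 𝓝 ((0 : E), (1 : ℝ)), (τ v • v.1, h (τ v • v.1)) ∈ frontier D :=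
      hzc.eventually (by simpa using hgraph)
    filter_upwards [h1, h2, heq] with v hv1 hv2 hv3
    exact gauge_translate_eq_inv hconv hopen ht hv1 hv2 rfl (by linarith)
  obtain ⟨hd1, hd2⟩ := inv_hitting_time_derivs hh htop hτ hτ0 heq
  refine ⟨(hτ.inv (by rw [hτ0]; exact hc.ne')).congr_of_eventuallyEq hev, ?_, ?_, ?_⟩
  · rw [hev.eq_of_nhds, hτ0]
  · rw [hev.fderiv_eq, hd1]
  · rw [hev.fderiv.fderiv_eq]; exact hd2

/-! ### The fundamental tensor and its determinant -/

open Matrix in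
/-- If the last row and column of `K` vanish and the last entry of `d` is `f`, then
`f • K + d dᵀ = L * S * (K + E) * Lᵀ`, where `E` is the last diagonal matrix unit,
`S = diag (f, …, f, f²)`, and `L` is the identity with its last column replaced by `d / f`. -/
lemma det_rank_one_update {m : ℕ} (K : Matrix (Fin (m + 1)) (Fin (m + 1)) ℝ)
    (hrow : ∀ j, K (Fin.last m) j = 0) (hcol : ∀ i, K i (Fin.last m) = 0)
    (d : Fin (m + 1) → ℝ) {f : ℝ} (hf : f ≠ 0) (hd : d (Fin.last m) = f) :
    (Matrix.of fun i j => f * K i j + d i * d j).det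
      = f ^ (m + 2) * (K + Matrix.single (Fin.last m) (Fin.last m) 1).det := by
  set l := Fin.last m with hl
  set L : Matrix (Fin (m + 1)) (Fin (m + 1)) ℝ :=
    Matrix.of fun i j => if j = l then d i / f else if i = j then 1 else 0 with hL
  set S : Matrix (Fin (m + 1)) (Fin (m + 1)) ℝ :=
    Matrix.diagonal fun i => if i = l then f ^ 2 else f with hS
  have hLdet : L.det = 1 := by
    have hut : L.BlockTriangular id := by
      intro i j hij
      have h1 : j ≠ l := (lt_of_lt_of_le hij (Fin.le_last i)).ne
      have h2 : i ≠ j := (ne_of_lt hij).symm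
      simp [hL, h1, h2]
    rw [Matrix.det_of_isUpperTriangular hut]
    refine Finset.prod_eq_one fun i _ => ?_
    by_cases hi : i = l
    · simp [hL, hi, hd, hf]
    · simp [hL, hi]
  have hSdet : S.det = f ^ (m + 2) := by
    rw [hS, Matrix.det_diagonal, Fin.prod_univ_castSucc]
    have : ∀ i : Fin m, i.castSucc ≠ l := fun i => (Fin.castSucc_lt_last i).ne
    simp [this, ← hl]
    ring
  have hfac : (Matrix.of fun i j => f * K i j + d i * d j)
      = L * (S * (K + Matrix.single l l 1)) * Lᵀ := by
    have hmid : S * (K + Matrix.single l l 1) = f • K + Matrix.single l l (f ^ 2) := by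
      ext i j
      rw [hS, Matrix.diagonal_mul]
      by_cases hi : i = l
      · subst hi; simp [hrow, Matrix.single_apply]
      · simp [hi, Ne.symm hi]
    have hLK : L * K = K := by
      ext i j
      rw [Matrix.mul_apply, Finset.sum_eq_single i]
      · by_cases hi : i = l
        · simp [hi, hrow]
        · simp [hL, hi]
      · intro k _ hk
        by_cases hkl : k = l
        · simp [hkl, hrow]
        · simp [hL, hkl, hk.symm]
      · simp
    have hKL : K * Lᵀ = K := by
      ext i j
      rw [Matrix.mul_apply, Finset.sum_eq_single j]
      · by_cases hj : j = l
        · simp [hj, hcol]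
        · simp [hL, hj]
      · intro k _ hk
        by_cases hkl : k = l
        · simp [hkl, hcol]
        · simp [hL, hkl, hk.symm]
      · simp
    rw [hmid, Matrix.mul_add, Matrix.add_mul, Matrix.mul_smul, Matrix.smul_mul, hLK, hKL]
    ext i j
    rw [Matrix.add_apply, Matrix.mul_apply, Finset.sum_eq_single l]
    · simp [hL]
      field_simp
    · intro k _ hk
      simp [Matrix.mul_single_apply_of_ne, hk]
    · simp
  rw [hfac, Matrix.det_mul, Matrix.det_mul, Matrix.det_mul, Matrix.det_transpose, hLdet, hSdet]
  ring

lemma half_hessian_sq {V : Type*} [NormedAddCommGroup V] [NormedSpace ℝ V] {F : V → ℝ} {e : V}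
    (hF : ContDiffAt ℝ 2 F e) (u w : V) :
    (1 / 2) * fderiv ℝ (fun v => fderiv ℝ (fun v' => F v' ^ 2) v w) e u
      = F e * fderiv ℝ (fderiv ℝ F) e u w + fderiv ℝ F e u * fderiv ℝ F e w := by
  have hd : ∀ᶠ v in 𝓝 e, DifferentiableAt ℝ F v := by
    filter_upwards [hF.eventually (by simp)] with z hz using hz.differentiableAt two_ne_zero
  have h1 : (fun v => fderiv ℝ (fun v' => F v' ^ 2) v w) =ᶠ[𝓝 e]
      fun v => 2 * (F v * fderiv ℝ F v w) := by
    filter_upwards [hd] with v hv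
    rw [fderiv_fun_pow 2 hv]
    simp
    ring
  have hF' : DifferentiableAt ℝ (fderiv ℝ F) e :=
    (hF.fderiv_right (m := 1) (by norm_num)).differentiableAt one_ne_zero
  have h2 : HasFDerivAt (fun v => fderiv ℝ F v w) _ e :=
    hF'.hasFDerivAt.clm_apply (hasFDerivAt_const w e)
  have h3 : HasFDerivAt (fun v => 2 * (F v * fderiv ℝ F v w)) _ e :=
    (hd.self_of_nhds.hasFDerivAt.mul h2).const_mul 2
  rw [h1.fderiv_eq, h3.fderiv]
  simp
  ring

end

/-! ### The weight function -/

/-- **first derivative of the weight function for the Hilbert metric.**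
Under the normalization `∂ᵢh(0)/h(0) = ∂ᵢb(0)/b(0)`, the weight function
`Ψ(t) = (1/2) log det G(t)` of the Hilbert metric along the vertical line satisfies
`Ψ'(0) = ((n+1)/2)(1/h(0) + 1/b(0))`. -/
theorem hilbert_weight_first_derivative {n : ℕ} (hn : 2 ≤ n)
    (D : Set (EuclideanSpace ℝ (Fin (n - 1)) × ℝ)) (hne : D.Nonempty)
    (hbdd : Bornology.IsBounded D) (hconv : Convex ℝ D) (hopen : IsOpen D)
    (h0D : ((0 : EuclideanSpace ℝ (Fin (n - 1))), (0 : ℝ)) ∈ D)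
    (U : Set (EuclideanSpace ℝ (Fin (n - 1)))) (hU : IsOpen U)
    (hU0 : (0 : EuclideanSpace ℝ (Fin (n - 1))) ∈ U)
    (h b : EuclideanSpace ℝ (Fin (n - 1)) → ℝ)
    (hh : ContDiffOn ℝ 2 h U) (hb : ContDiffOn ℝ 2 b U)
    (hgraphTop : ∀ z ∈ U, ((z, h z) : EuclideanSpace ℝ (Fin (n - 1)) × ℝ) ∈ frontier D)
    (hgraphBot : ∀ z ∈ U, ((z, b z) : EuclideanSpace ℝ (Fin (n - 1)) × ℝ) ∈ frontier D)
    (hbetween : ∀ z ∈ U, ∀ t : ℝ,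
      ((z, t) : EuclideanSpace ℝ (Fin (n - 1)) × ℝ) ∈ D → b z < t ∧ t < h z)
    (hnormal : ∀ i : Fin (n - 1),
      fderiv ℝ h 0 (EuclideanSpace.single i 1) / h 0
        = fderiv ℝ b 0 (EuclideanSpace.single i 1) / b 0)
    (FH : (EuclideanSpace ℝ (Fin (n - 1)) × ℝ) → (EuclideanSpace ℝ (Fin (n - 1)) × ℝ) → ℝ)
    (hFH : ∀ x v, FH x v = (gauge ((· - x) '' D) v + gauge ((· - x) '' D) (-v)) / 2)
    (hsmooth : ∀ᶠ t in nhds (0 : ℝ), ContDiffAt ℝ 3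
      (fun p : (EuclideanSpace ℝ (Fin (n - 1)) × ℝ) × (EuclideanSpace ℝ (Fin (n - 1)) × ℝ) =>
        FH p.1 p.2)
      (((0 : EuclideanSpace ℝ (Fin (n - 1))), t),
        ((0 : EuclideanSpace ℝ (Fin (n - 1))), (1 : ℝ))))
    (G : ℝ → Matrix (Fin n) (Fin n) ℝ)
    (hG : ∀ t : ℝ, ∀ i j : Fin n, G t i j =
      (1 / 2) * fderiv ℝ
        (fun v => fderiv ℝ
          (fun v' => (FH ((0 : EuclideanSpace ℝ (Fin (n - 1))), t) v') ^ 2) v (coordVec n j))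
        ((0 : EuclideanSpace ℝ (Fin (n - 1))), (1 : ℝ)) (coordVec n i))
    (hGpos : ∀ᶠ t in nhds (0 : ℝ), (G t).PosDef)
    (Ψ : ℝ → ℝ) (hΨ : ∀ t : ℝ, Ψ t = (1 / 2) * Real.log (G t).det) :
    HasDerivAt Ψ (((n + 1 : ℝ) / 2) * (1 / h 0 + 1 / b 0)) 0 := by
  classical
  obtain ⟨m, rfl⟩ : ∃ m, n = m + 1 := ⟨n - 1, by omega⟩
  -- `h'` bounds the reflected body `-D` from above; passing to `-D`
  -- turns the backward gauge into a forward one.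
  set h' : EuclideanSpace ℝ (Fin (m + 1 - 1)) → ℝ := fun z => -b (-z) with hh'
  have hhc : ContDiffAt ℝ 2 h 0 := hh.contDiffAt (hU.mem_nhds hU0)
  have hh'c : ContDiffAt ℝ 2 h' 0 := by
    have h1 : ContDiffAt ℝ 2 b (-(0 : EuclideanSpace ℝ (Fin (m + 1 - 1)))) := by
      rw [neg_zero]; exact hb.contDiffAt (hU.mem_nhds hU0)
    exact (ContDiffAt.comp (g := b) (0 : EuclideanSpace ℝ (Fin (m + 1 - 1))) h1 contDiffAt_id.neg).neg
  have htopE : ∀ᶠ z in 𝓝 (0 : EuclideanSpace ℝ (Fin (m + 1 - 1))), (z, h z) ∈ frontier D := by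
    filter_upwards [hU.mem_nhds hU0] with z hz using hgraphTop z hz
  have hbotE : ∀ᶠ z in 𝓝 (0 : EuclideanSpace ℝ (Fin (m + 1 - 1))), (z, h' z) ∈ frontier (-D) := by
    have hneg : Tendsto (fun z : EuclideanSpace ℝ (Fin (m + 1 - 1)) => -z) (𝓝 0) (𝓝 0) := by
      simpa using (continuous_neg (G := EuclideanSpace ℝ (Fin (m + 1 - 1)))).tendsto 0
    filter_upwards [hneg.eventually (hU.mem_nhds hU0)] with z hz
    have h1 : frontier (-D) = -frontier D :=
      ((Homeomorph.neg (EuclideanSpace ℝ (Fin (m + 1 - 1)) × ℝ)).preimage_frontier D).symm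
    rw [h1, Set.mem_neg]
    simpa [h'] using hgraphBot (-z) hz
  set e : EuclideanSpace ℝ (Fin (m + 1 - 1)) × ℝ := (0, 1) with he
  set f : ℝ → ℝ := fun t => ((h 0 - t)⁻¹ + (t - b 0)⁻¹) / 2 with hf
  set K : Matrix (Fin (m + 1)) (Fin (m + 1)) ℝ := Matrix.of fun i j =>
    (-fderiv ℝ (fderiv ℝ h) 0 (coordVec (m + 1) i).1 (coordVec (m + 1) j).1
      + -fderiv ℝ (fderiv ℝ h') 0 (coordVec (m + 1) i).1 (coordVec (m + 1) j).1) / 2 with hK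
  have hlast : coordVec (m + 1) (Fin.last m) = e := by simp [coordVec, he]
  set k : ℝ := (K + Matrix.single (Fin.last m) (Fin.last m) 1).det with hk
  have hDt : ∀ᶠ t in 𝓝 (0 : ℝ), ((0 : EuclideanSpace ℝ (Fin (m + 1 - 1))), t) ∈ D :=
    (Continuous.prodMk_right (0 : EuclideanSpace ℝ (Fin (m + 1 - 1)))).continuousAt.eventually
      (hopen.mem_nhds h0D)
  have hdet : ∀ t : ℝ, ((0 : EuclideanSpace ℝ (Fin (m + 1 - 1))), t) ∈ D →
      (G t).det = f t ^ (m + 2) * k := by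
    intro t ht
    obtain ⟨hbt, hth⟩ := hbetween 0 hU0 t ht
    obtain ⟨p1, p2, p3, p4⟩ := gauge_second_order hconv hopen hhc htopE ht hth
    obtain ⟨q1, q2, q3, q4⟩ := gauge_second_order (D := -D) (t := -t) hconv.neg hopen.neg hh'c
      hbotE (by simpa using ht) (by simpa [h'] using hbt)
    have hset : (· - ((0 : EuclideanSpace ℝ (Fin (m + 1 - 1))), -t)) '' (-D)
        = -((· - ((0 : EuclideanSpace ℝ (Fin (m + 1 - 1))), t)) '' D) := by
      ext y
      simp only [Set.mem_image, Set.mem_neg]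
      constructor
      · rintro ⟨z, hz, rfl⟩
        exact ⟨-z, hz, by ext <;> simp; ring⟩
      · rintro ⟨z, hz, hzy⟩
        refine ⟨-z, by simpa using hz, ?_⟩
        rw [← neg_neg y, ← hzy]
        ext <;> simp; ring
    set R := gauge ((· - ((0 : EuclideanSpace ℝ (Fin (m + 1 - 1))), t)) '' D) with hR
    set Q := gauge ((· - ((0 : EuclideanSpace ℝ (Fin (m + 1 - 1))), -t)) '' (-D)) with hQ
    have hFt : FH (0, t) = fun v => (1 / 2 : ℝ) • (R v + Q v) := by
      funext v
      rw [hFH, hQ, hset, gauge_neg_set_eq_gauge_neg, smul_eq_mul]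
      ring
    have hbt' : h' 0 - -t = t - b 0 := by simp [h']; ring
    rw [hbt'] at q2 q3
    have hFc : ContDiffAt ℝ 2 (FH (0, t)) e := by
      rw [hFt]; exact (p1.add q1).const_smul _
    have hDF : fderiv ℝ (FH (0, t)) =ᶠ[𝓝 e]
        fun v => (1 / 2 : ℝ) • (fderiv ℝ R v + fderiv ℝ Q v) := by
      filter_upwards [p1.eventually (by simp), q1.eventually (by simp)] with v hv1 hv2
      have h1 := hv1.differentiableAt two_ne_zero
      have h2 := hv2.differentiableAt two_ne_zero
      rw [hFt]
      exact ((h1.hasFDerivAt.add h2.hasFDerivAt).const_smul (1 / 2 : ℝ)).fderiv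
    have hD2F : ∀ u w, fderiv ℝ (fderiv ℝ (FH (0, t))) e u w
        = (-fderiv ℝ (fderiv ℝ h) 0 u.1 w.1 + -fderiv ℝ (fderiv ℝ h') 0 u.1 w.1) / 2 := by
      intro u w
      have h1 := (p1.fderiv_right (m := 1) (by norm_num)).differentiableAt one_ne_zero
      have h2 := (q1.fderiv_right (m := 1) (by norm_num)).differentiableAt one_ne_zero
      have h0 : HasFDerivAt (fun v => (1 / 2 : ℝ) • (fderiv ℝ R v + fderiv ℝ Q v)) _ e :=
        (h1.hasFDerivAt.add h2.hasFDerivAt).const_smul (1 / 2 : ℝ)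
      rw [hDF.fderiv_eq, h0.fderiv]
      have h3 := p4 u w
      have h4 := q4 u w
      simp only [smul_apply, add_apply, smul_eq_mul]
      rw [h3, h4]
      ring
    have hFe : FH (0, t) e = f t := by
      rw [hFt]; simp only [hf]; rw [p2, q2, smul_eq_mul]; ring
    have hDFe : fderiv ℝ (FH (0, t)) e e = f t := by
      rw [hDF.eq_of_nhds]; simp only [smul_apply, add_apply, smul_eq_mul, hf]
      rw [p3, q3]; ring
    have hfpos : f t ≠ 0 := by
      have h1 : 0 < h 0 - t := sub_pos.2 hth
      have h2 : 0 < t - b 0 := sub_pos.2 hbt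
      simp only [hf]; positivity
    have hGt : G t = Matrix.of fun i j => f t * K i j
        + fderiv ℝ (FH (0, t)) e (coordVec (m + 1) i)
          * fderiv ℝ (FH (0, t)) e (coordVec (m + 1) j) := by
      ext i j
      rw [hG, half_hessian_sq hFc, hFe, hD2F]
      rfl
    rw [hGt]
    refine det_rank_one_update K ?_ ?_ _ hfpos ?_
    · intro j; simp [hK, hlast, he]
    · intro i; simp [hK, hlast, he]
    · simp only [hlast, hDFe]
  obtain ⟨hb0, h0h⟩ := hbetween 0 hU0 0 h0D
  have hf0 : 0 < f 0 := by
    have h1 : 0 < h 0 - 0 := sub_pos.2 h0h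
    have h2 : 0 < 0 - b 0 := sub_pos.2 hb0
    simp only [hf]; positivity
  have hk0 : k ≠ 0 := by
    have h1 := hGpos.self_of_nhds.det_pos
    rw [hdet 0 h0D] at h1
    exact right_ne_zero_of_mul h1.ne'
  have hfd : HasDerivAt f (((h 0)⁻¹ ^ 2 - (b 0)⁻¹ ^ 2) / 2) 0 := by
    have h1 : HasDerivAt (fun t => (h 0 - t)⁻¹) _ 0 :=
      ((hasDerivAt_id (0 : ℝ)).const_sub (h 0)).inv (by simpa using h0h.ne')
    have h2 : HasDerivAt (fun t => (t - b 0)⁻¹) _ 0 :=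
      ((hasDerivAt_id (0 : ℝ)).sub_const (b 0)).inv (by simpa using hb0.ne)
    refine ((h1.add h2).div_const 2).congr_deriv ?_
    simp
    ring
  have hΨev : Ψ =ᶠ[𝓝 0] fun t => (1 / 2) * ((m + 2 : ℕ) * Real.log (f t) + Real.log k) := by
    filter_upwards [hDt, hfd.continuousAt.eventually_ne hf0.ne'] with t ht hft
    rw [hΨ, hdet t ht, Real.log_mul (pow_ne_zero _ hft) hk0, Real.log_pow]
  have hlog := (((hfd.log hf0.ne').const_mul ((m + 2 : ℕ) : ℝ)).add_const (Real.log k)).const_mul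
    (1 / 2 : ℝ)
  refine (hlog.congr_of_eventuallyEq hΨev).congr_deriv ?_
  have hane : h 0 ≠ 0 := h0h.ne'
  have hbne : b 0 ≠ 0 := hb0.ne
  have hdiff : b 0 - h 0 ≠ 0 := (hb0.trans h0h |> sub_neg.2).ne
  have hf0' : f 0 = (b 0 - h 0) / (2 * h 0 * b 0) := by
    simp only [hf]; rw [sub_zero, zero_sub]; field_simp; ring
  rw [hf0']
  push_cast
  field_simp
  ring
end

section
/- (Second derivative of the weight function for the Hilbert metric.) Let n ≥ 2, write ℝⁿ = ℝ^{n−1} × ℝ, and let D ⊆ ℝⁿ be a nonempty bounded convex open set with 0 ∈ D. Let U ⊆ ℝ^{n−1} be an open neighborhood of 0 and h, b : U → ℝ be twice continuously differentiable such that for every z ∈ U the points (z, h(z)) and (z, b(z)) lie in the frontier of D, and b(z) < t < h(z) whenever (z,t) ∈ D; so h(0) > 0 > b(0). Assume the normalization ∂ᵢh(0)/h(0) = ∂ᵢb(0)/b(0) for every i ∈ {1,…,n−1}. Define F_H(x,v) := (gauge (D − x) v + gauge (D − x) (−v))/2, let eₙ := (0,1), assume F_H is four times continuously differentiable on a neighborhood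 of ((0,t), eₙ) for t near 0 in ℝⁿ × ℝⁿ, and let G(t) be the n×n matrix with entries G(t)ᵢⱼ := (1/2)·∂²(F_H²)/∂vⁱ∂vʲ((0,t), eₙ); assume G(t) is positive definite for t near 0. Then Ψ(t) := (1/2)·log(det G(t)) is twice differentiable at 0 with Ψ''(0) = ((n+1)/2)·(1/h(0)² + 1/b(0)²). -/
/-!
Let `F_t` be the Hilbert metric based at `(0, t)`, let `e = (0, 1)`, and put
`f(t) = F_t(e) = (1/(h(0) - t) + 1/(t - b(0))) / 2`.

The gauge `A` of `D - (0, t)` at `(w, 1)` is determined by `t + 1/A = h(w/A)`, and similarly for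
the downward direction with `b`. Expanding this relation to second order in `w` shows that the
horizontal Hessian of `F_t` at `e` is `(D²b(0) - D²h(0)) / 2`, which does not depend on `t`
(`gauge_graph_eq`, `implicit_expansion`, `hilbert_value_and_hessian`). No regularity of the two
gauges separately is needed: `F_t` is `C²` by assumption and its second-order Taylor coefficients
are unique (`peano_two`, `coeff_eq_zero`).

Since `F_t` is `1`-homogeneous, `e` lies in the kernel of its Hessian and `DF_t(e) e = f(t)`
(`euler_homogeneous`). Hence the full Hessian `K` is constant in `t`, and
`G(t) = η ηᵀ + f(t) K`, where `η = DF_t(e)` has last entry `f(t)` and the last row and column of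
`K` vanish. Therefore `det G(t) = f(t)^(n+1) c` with a constant `c` (`det_rank_one_add`), and
`Ψ = (n+1)/2 · log f + const` is differentiated explicitly (`weight_calculus`).
-/

section Lemmas

open Asymptotics Filter Topology

/-- Second-order Taylor expansion with Peano remainder along a line. -/
lemma peano_two {V : Type*} [NormedAddCommGroup V] [NormedSpace ℝ V] {F : V → ℝ} {x : V}
    (hF : ContDiffAt ℝ 2 F x) (u : V) :
    (fun ε : ℝ => F (x + ε • u) - F x - ε * fderiv ℝ F x u
      - ε ^ 2 / 2 * fderiv ℝ (fderiv ℝ F) x u u) =o[𝓝 0] (fun ε => ε ^ 2) := by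
  set L := fderiv ℝ (fderiv ℝ F) x u u with hL
  have hline : ∀ ε : ℝ, HasDerivAt (fun ε : ℝ => x + ε • u) u ε := fun ε => by
    simpa using ((hasDerivAt_id ε).smul_const u).const_add x
  have htend : Tendsto (fun ε : ℝ => x + ε • u) (𝓝 0) (𝓝 x) := by
    simpa using (hline 0).continuousAt.tendsto
  have hdiff : ∀ᶠ y in 𝓝 x, DifferentiableAt ℝ F y :=
    (hF.eventually (by simp)).mono fun y hy => hy.differentiableAt (by simp)
  have h2 : DifferentiableAt ℝ (fderiv ℝ F) x :=
    (hF.fderiv_right (m := 1) (by norm_num)).differentiableAt (by simp)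
  have hd1 : HasDerivAt (fun ε : ℝ => fderiv ℝ F (x + ε • u) u) L 0 := by
    have h3 : HasFDerivAt (fun y => fderiv ℝ F y u) ((fderiv ℝ (fderiv ℝ F) x).flip u)
        (x + (0 : ℝ) • u) := by
      rw [zero_smul, add_zero]
      exact (ContinuousLinearMap.apply ℝ ℝ u).hasFDerivAt.comp x h2.hasFDerivAt
    exact h3.comp_hasDerivAt (0 : ℝ) (hline 0)
  rw [isLittleO_iff]
  intro c hc
  have hlo := (hasDerivAt_iff_isLittleO.1 hd1).def hc
  have hboth := hlo.and (htend.eventually hdiff)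
  obtain ⟨δ, hδ, hball⟩ := Metric.eventually_nhds_iff_ball.1 hboth
  filter_upwards [Metric.ball_mem_nhds (0 : ℝ) hδ] with ε hε
  have hsub : ∀ s ∈ Set.uIcc 0 ε, s ∈ Metric.ball (0 : ℝ) δ ∧ |s| ≤ |ε| := by
    intro s hs
    have h1 : |s| ≤ |ε| := by
      simpa using Set.abs_sub_left_of_mem_uIcc hs
    refine ⟨?_, h1⟩
    simp only [Metric.mem_ball, dist_zero_right, Real.norm_eq_abs] at hε ⊢
    exact lt_of_le_of_lt h1 hε
  have key := Convex.norm_image_sub_le_of_norm_hasDerivWithin_le (𝕜 := ℝ)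
    (f := fun s : ℝ => F (x + s • u) - F x - s * fderiv ℝ F x u - s ^ 2 / 2 * L)
    (f' := fun s : ℝ => fderiv ℝ F (x + s • u) u - fderiv ℝ F x u - s * L)
    (s := Set.uIcc 0 ε) (C := c * |ε|) (x := 0) (y := ε) ?_ ?_ (convex_uIcc 0 ε)
    Set.left_mem_uIcc Set.right_mem_uIcc
  · simp only [zero_smul, add_zero, sub_self, zero_mul, sub_zero] at key
    norm_num at key
    simpa [pow_two, mul_assoc] using key
  · intro s hs
    have hd := (hball s (hsub s hs).1).2
    have e1 : HasDerivAt (fun s : ℝ => F (x + s • u)) (fderiv ℝ F (x + s • u) u) s :=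
      hd.hasFDerivAt.comp_hasDerivAt s (hline s)
    have e2 : HasDerivAt (fun s : ℝ => s * fderiv ℝ F x u) (fderiv ℝ F x u) s := by
      simpa using (hasDerivAt_id s).mul_const (fderiv ℝ F x u)
    have e3 : HasDerivAt (fun s : ℝ => s ^ 2 / 2 * L) (s * L) s := by
      have := (((hasDerivAt_id s).pow 2).div_const 2).mul_const L
      refine this.congr_deriv ?_
      simp
    exact (((e1.sub_const _).sub e2).sub e3).hasDerivWithinAt
  · intro s hs
    have := (hball s (hsub s hs).1).1
    simp only [zero_smul, add_zero, sub_zero, smul_eq_mul] at this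
    refine this.trans ?_
    rw [Real.norm_eq_abs]
    exact mul_le_mul_of_nonneg_left (hsub s hs).2 hc.le

/-- Uniqueness of the quadratic Taylor coefficient: averaging over `ε` and `-ε` removes the
linear term. -/
lemma coeff_eq_zero {b c : ℝ}
    (h : (fun ε : ℝ => b * ε + c * ε ^ 2) =o[𝓝 0] (fun ε => ε ^ 2)) : c = 0 := by
  have hneg : Tendsto (fun ε : ℝ => -ε) (𝓝 0) (𝓝 0) := by
    simpa using (continuous_neg (G := ℝ)).tendsto 0
  have h' := h.comp_tendsto hneg
  have h2 : (fun ε : ℝ => (2 * c) * ε ^ 2) =o[𝓝 0] (fun ε => ε ^ 2) := by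
    refine (h.add (h'.congr_right fun ε => by simp)).congr_left fun ε => ?_
    simp only [Function.comp]; ring
  have h3 : (fun ε : ℝ => 2 * c) =o[𝓝[≠] 0] (fun _ => (1 : ℝ)) := by
    rw [isLittleO_iff] 
    intro d hd
    filter_upwards [(h2.def hd).filter_mono nhdsWithin_le_nhds, self_mem_nhdsWithin] with ε he hne
    have : 0 < ‖ε ^ 2‖ := norm_pos_iff.2 (pow_ne_zero 2 hne)
    rw [norm_mul] at he
    simpa using le_of_mul_le_mul_right he this
  simpa [isLittleO_const_const_iff] using h3

/-- If `A` solves `1 + t A = A φ(ε / A)`, the quadratic coefficient of `A` at `0` is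
`-φ''(0) / 2`. The value `A 0 = 1 / (φ 0 - t)` depends on `t`, but this coefficient does not: the
factor `1 / A 0` coming from the quadratic term `A (ε / A)²` cancels against `φ 0 - t`. -/
lemma implicit_expansion {φ A : ℝ → ℝ} {t c₁ c₂ : ℝ}
    (hφ : (fun x => φ x - φ 0 - x * c₁ - x ^ 2 / 2 * c₂) =o[𝓝 0] (fun x => x ^ 2))
    (hA : ContinuousAt A 0) (hA0 : 0 < A 0)
    (heq : ∀ᶠ ε in 𝓝 0, 1 + t * A ε = A ε * φ (ε / A ε)) :
    (fun ε => A ε - A 0 + ε * (c₁ * A 0) + ε ^ 2 / 2 * c₂) =o[𝓝 0] (fun ε => ε ^ 2) := by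
  have h0 := heq.self_of_nhds
  rw [zero_div] at h0
  have hAne : ∀ᶠ ε in 𝓝 0, 0 < A ε := hA.eventually (lt_mem_nhds hA0)
  have hdiv : Tendsto (fun ε => ε / A ε) (𝓝 0) (𝓝 0) := by
    have : ContinuousAt (fun ε => ε / A ε) 0 := continuousAt_id.div hA hA0.ne'
    simpa using this.tendsto
  have h1 := hφ.comp_tendsto hdiv
  have h2 : (fun ε => A 0 * A ε * (φ (ε / A ε) - φ 0 - ε / A ε * c₁ - (ε / A ε) ^ 2 / 2 * c₂))
      =o[𝓝 0] (fun ε => ε ^ 2) := by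
    have hbd : (fun ε => A 0 * A ε) =O[𝓝 0] (fun _ => (1 : ℝ)) :=
      (continuousAt_const.mul hA).tendsto.isBigO_one ℝ
    have hbd2 : (fun ε => (A ε)⁻¹ ^ 2) =O[𝓝 0] (fun _ => (1 : ℝ)) :=
      ((hA.inv₀ hA0.ne').pow 2).tendsto.isBigO_one ℝ
    have h3 : (fun ε => (ε / A ε) ^ 2) =O[𝓝 0] (fun ε => ε ^ 2) := by
      refine ((isBigO_refl (fun ε : ℝ => ε ^ 2) (𝓝 0)).mul hbd2).congr ?_ ?_ <;> intro ε
      · rw [div_eq_mul_inv, mul_pow]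
      · ring
    simpa using hbd.mul_isLittleO (h1.trans_isBigO h3)
  have h4 : (fun ε => ε ^ 2 * (c₂ / 2 * (1 - A 0 / A ε))) =o[𝓝 0] (fun ε => ε ^ 2) := by
    have : (fun ε => c₂ / 2 * (1 - A 0 / A ε)) =o[𝓝 0] (fun _ => (1 : ℝ)) := by
      rw [isLittleO_one_iff]
      have : ContinuousAt (fun ε => c₂ / 2 * (1 - A 0 / A ε)) 0 :=
        continuousAt_const.mul (continuousAt_const.sub (continuousAt_const.div hA hA0.ne'))
      simpa [hA0.ne'] using this.tendsto
    simpa using (isBigO_refl (fun ε : ℝ => ε ^ 2) (𝓝 0)).mul_isLittleO this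
  refine (h4.sub h2).congr' ?_ EventuallyEq.rfl
  filter_upwards [heq, hAne] with ε he hp
  have hp' := hp.ne'
  have key : A 0 * (A ε * φ (ε / A ε)) = A 0 * (1 + t * A ε) := by rw [he]
  have key2 : A ε * (A 0 * φ 0) = A ε * (1 + t * A 0) := by rw [h0]
  have e : A 0 * A ε * (φ (ε / A ε) - φ 0 - ε / A ε * c₁ - (ε / A ε) ^ 2 / 2 * c₂)
      = A 0 * (A ε * φ (ε / A ε)) - A ε * (A 0 * φ 0) - A 0 * ε * c₁
        - ε ^ 2 * c₂ / 2 * (A 0 / A ε) := by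
    field_simp
  rw [e, key, key2]; ring

/-- The gauge of `D - q` equals `1` at `v` exactly when the ray from `q` along `v` meets the
boundary of `D` at time `1`. -/
lemma frontier_translate {V : Type*} [NormedAddCommGroup V] [NormedSpace ℝ V] {D : Set V}
    (hD : Convex ℝ D) (hopen : IsOpen D) {q : V} (hq : q ∈ D) (v : V) :
    gauge ((· - q) '' D) v = 1 ↔ q + v ∈ frontier D := by
  have him : (· - q) '' D = Homeomorph.subRight q '' D := rfl
  have hop : IsOpen ((· - q) '' D) := by rw [him]; exact (Homeomorph.subRight q).isOpenMap _ hopen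
  have hcv : Convex ℝ ((· - q) '' D) := by
    simpa [sub_eq_add_neg, add_comm] using hD.translate (-q)
  have h0 : (0 : V) ∈ (· - q) '' D := ⟨q, hq, sub_self q⟩
  rw [gauge_eq_one_iff_mem_frontier hcv (hop.mem_nhds h0), him, ← Homeomorph.image_frontier]
  constructor
  · rintro ⟨y, hy, rfl⟩; simpa using hy
  · intro h; exact ⟨q + v, h, by simp⟩

/-- If the graph of `k` is the part of the boundary of `D` above (`σ = 1`) or below (`σ = -1`)
the point `(0, t)`, the gauge `A` of `D - (0, t)` at `(ε w, σ)` satisfies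
`t + σ / A = k(ε w / A)`. Indeed `(0, t) + A⁻¹ (ε w, σ)` is a boundary point, and the vertical ray
from the interior point `(ε w / A, t)` meets the boundary only once. -/
lemma gauge_graph_eq {E : Type*} [NormedAddCommGroup E] [NormedSpace ℝ E] {D : Set (E × ℝ)}
    (hbdd : Bornology.IsBounded D) (hconv : Convex ℝ D) (hopen : IsOpen D)
    {t : ℝ} (ht : ((0 : E), t) ∈ D) {U : Set E} (hU : IsOpen U) (hU0 : (0 : E) ∈ U)
    {k : E → ℝ} (hk : ∀ z ∈ U, (z, k z) ∈ frontier D) {σ : ℝ} (hσ : σ = 1 ∨ σ = -1)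
    (hside : ∀ z ∈ U, (z, t) ∈ D → 0 < σ * (k z - t)) (w : E) :
    ContinuousAt (fun ε : ℝ => gauge ((· - ((0 : E), t)) '' D) (ε • w, σ)) 0 ∧
    0 < gauge ((· - ((0 : E), t)) '' D) ((0 : ℝ) • w, σ) ∧
    ∀ᶠ ε in 𝓝 (0 : ℝ), σ + t * gauge ((· - ((0 : E), t)) '' D) (ε • w, σ) =
      gauge ((· - ((0 : E), t)) '' D) (ε • w, σ) *
        k ((ε / gauge ((· - ((0 : E), t)) '' D) (ε • w, σ)) • w) := by
  set S := (· - ((0 : E), t)) '' D with hS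
  have him : S = Homeomorph.subRight ((0 : E), t) '' D := rfl
  have hop : IsOpen S := by rw [him]; exact (Homeomorph.subRight _).isOpenMap _ hopen
  have hcv : Convex ℝ S := by
    simpa [hS, sub_eq_add_neg, add_comm] using hconv.translate (-((0 : E), t))
  have h0 : (0 : E × ℝ) ∈ S := ⟨_, ht, sub_self _⟩
  have hSn : S ∈ 𝓝 (0 : E × ℝ) := hop.mem_nhds h0
  have hSb : Bornology.IsBounded S := by
    obtain ⟨R, hR⟩ := hbdd.exists_norm_le
    refine isBounded_iff_forall_norm_le.2 ⟨R + ‖((0 : E), t)‖, ?_⟩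
    rintro _ ⟨y, hy, rfl⟩
    exact (norm_sub_le _ _).trans (add_le_add_left (hR y hy) _)
  have hσ0 : σ ≠ 0 := by rcases hσ with h | h <;> simp [h]
  have hcont : ContinuousAt (fun ε : ℝ => gauge S (ε • w, σ)) 0 :=
    ((continuous_gauge hcv hSn).comp (by fun_prop)).continuousAt
  have hpos : 0 < gauge S ((0 : ℝ) • w, σ) := by
    refine (gauge_pos (absorbent_nhds_zero hSn) ?_).2 (by simp [hσ0])
    exact (NormedSpace.isVonNBounded_iff ℝ).2 hSb
  refine ⟨hcont, hpos, ?_⟩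
  have hz : Tendsto (fun ε : ℝ => (ε / gauge S (ε • w, σ)) • w) (𝓝 0) (𝓝 0) := by
    have : ContinuousAt (fun ε : ℝ => (ε / gauge S (ε • w, σ)) • w) 0 :=
      (continuousAt_id.div hcont hpos.ne').smul continuousAt_const
    simpa using this.tendsto
  have hzD : ∀ᶠ ε in 𝓝 (0 : ℝ), ((ε / gauge S (ε • w, σ)) • w, t) ∈ D :=
    (hz.prodMk_nhds tendsto_const_nhds).eventually (hopen.mem_nhds ht)
  filter_upwards [hcont.eventually (lt_mem_nhds hpos), hz.eventually (hU.mem_nhds hU0), hzD]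
    with ε hA hzU hzD
  set A := gauge S (ε • w, σ) with hAdef
  set z := (ε / A) • w with hzdef
  have h1 : gauge S (A⁻¹ • ((ε • w, σ) : E × ℝ)) = 1 := by
    rw [gauge_smul_of_nonneg (inv_nonneg.2 hA.le), smul_eq_mul, ← hAdef, inv_mul_cancel₀ hA.ne']
  have h2 : (z, t + A⁻¹ * σ) ∈ frontier D := by
    have := (frontier_translate hconv hopen ht _).1 h1
    convert this using 1
    simp [hzdef, smul_smul, div_eq_inv_mul]
  have h3 : gauge ((· - (z, t)) '' D) (A⁻¹ • ((0, σ) : E × ℝ)) = 1 := by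
    rw [frontier_translate hconv hopen hzD]; simpa using h2
  have h4 : gauge ((· - (z, t)) '' D) ((σ * (k z - t)) • ((0, σ) : E × ℝ)) = 1 := by
    rw [frontier_translate hconv hopen hzD]
    have : (z, t) + (σ * (k z - t)) • ((0, σ) : E × ℝ) = (z, k z) := by
      rcases hσ with h | h <;> simp [h]
    rw [this]; exact hk z hzU
  have hm := hside z hzU hzD
  rw [gauge_smul_of_nonneg (inv_nonneg.2 hA.le), smul_eq_mul] at h3
  rw [gauge_smul_of_nonneg hm.le, smul_eq_mul] at h4
  have h5 : A⁻¹ = σ * (k z - t) := by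
    have hne : gauge ((· - (z, t)) '' D) ((0, σ) : E × ℝ) ≠ 0 := by
      intro h; simp [h] at h3
    exact mul_right_cancel₀ hne (h3.trans h4.symm)
  have h6 : A * (σ * (k z - t)) = 1 := by rw [← h5, mul_inv_cancel₀ hA.ne']
  rcases hσ with h | h <;> rw [h] at h6 ⊢ <;> linarith

/-- Determinant of `η ηᵀ + η l • K` when row and column `l` of `K` vanish. -/
lemma det_rank_one_add {ι : Type*} [Fintype ι] [DecidableEq ι] (K : Matrix ι ι ℝ) (η : ι → ℝ)
    (l : ι) (hr : ∀ j, K l j = 0) (hc : ∀ i, K i l = 0) (hl : η l ≠ 0) :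
    (Matrix.of fun i j => η i * η j + η l * K i j).det =
      η l ^ (Fintype.card ι + 1) * (K + Matrix.single l l 1).det := by
  -- Congruence by the unipotent `L`, which sends `e_l` to `η / η l` and fixes the other `e_i`,
  -- turns `η l • K + (η l) ^ 2 • single l l 1` into the given matrix.
  set L : Matrix ι ι ℝ := 1 + Matrix.vecMulVec (fun i => η i / η l - if i = l then 1 else 0)
    (Pi.single l 1) with hL
  have hLdet : L.det = 1 := by
    rw [hL, Matrix.vecMulVec_eq Unit, Matrix.det_one_add_replicateCol_mul_replicateRow]
    simp [hl]
  set M : Matrix ι ι ℝ :=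
    Matrix.diagonal (Function.update 1 l (η l)) * (η l • (K + Matrix.single l l 1)) with hM
  have hMdet : M.det = η l ^ (Fintype.card ι + 1) * (K + Matrix.single l l 1).det := by
    rw [hM, Matrix.det_mul, Matrix.det_smul, Matrix.det_diagonal,
      Finset.prod_update_of_mem (Finset.mem_univ l)]
    simp; ring
  have hMe : ∀ i j, M i j =
      η l * K i j + (if i = l then 1 else 0) * (if j = l then 1 else 0) * η l ^ 2 := by
    intro i j
    rw [hM, Matrix.diagonal_mul]
    by_cases hi : i = l
    · subst hi
      by_cases hj : j = i
      · subst hj; simp [hr]; ring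
      · simp [hr, hj, Ne.symm hj]
    · simp [hi, Ne.symm hi]
  have hLM : (Matrix.of fun i j => η i * η j + η l * K i j) = L * M * L.transpose := by
    have h1 : ∀ i j, (L * M) i j = M i j + (η i / η l - (if i = l then 1 else 0)) * M l j := by
      intro i j
      simp [hL, add_mul, Matrix.add_apply, Matrix.vecMulVec_mul,
        Matrix.vecMulVec_apply]
    ext i j
    rw [hL, Matrix.transpose_add, Matrix.transpose_vecMulVec, Matrix.mul_add, Matrix.mul_vecMulVec]
    simp only [Matrix.add_apply, Matrix.vecMulVec_apply, Matrix.transpose_one, mul_one,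
      Matrix.mulVec_single_one, Matrix.col_apply, Matrix.of_apply, ← hL, h1, hMe, hr, hc]
    simp
    by_cases hi : i = l <;> by_cases hj : j = l <;> simp [hi, hj, hr, hc] <;> field_simp <;> ring
  rw [hLM, Matrix.det_mul, Matrix.det_mul, Matrix.det_transpose, hLdet, hMdet]; ring

lemma fderiv_fderiv_sq {V : Type*} [NormedAddCommGroup V] [NormedSpace ℝ V] {F : V → ℝ} {e : V}
    (hF : ContDiffAt ℝ 2 F e) (a c : V) :
    fderiv ℝ (fun v => fderiv ℝ (fun v' => F v' ^ 2) v c) e a =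
      2 * (fderiv ℝ F e a * fderiv ℝ F e c + F e * fderiv ℝ (fderiv ℝ F) e a c) := by
  have hdiff : ∀ᶠ y in 𝓝 e, DifferentiableAt ℝ F y :=
    (hF.eventually (by simp)).mono fun y hy => hy.differentiableAt (by simp)
  have h2 : DifferentiableAt ℝ (fderiv ℝ F) e :=
    (hF.fderiv_right (m := 1) (by norm_num)).differentiableAt (by simp)
  have hev : (fun v => fderiv ℝ (fun v' => F v' ^ 2) v c) =ᶠ[𝓝 e]
      fun v => 2 * (F v * fderiv ℝ F v c) := by
    filter_upwards [hdiff] with v hv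
    rw [(hv.hasFDerivAt.pow 2).fderiv]
    simp; ring
  have h3 : HasFDerivAt (fun y => fderiv ℝ F y c) ((fderiv ℝ (fderiv ℝ F) e).flip c) e :=
    (ContinuousLinearMap.apply ℝ ℝ c).hasFDerivAt.comp e h2.hasFDerivAt
  rw [hev.fderiv_eq, ((hdiff.self_of_nhds.hasFDerivAt.fun_mul h3).const_mul 2).fderiv]
  simp; ring

/-- Euler's relation for a positively `1`-homogeneous function, and its derivative. -/
lemma euler_homogeneous {V : Type*} [NormedAddCommGroup V] [NormedSpace ℝ V] {F : V → ℝ} {e : V}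
    (hF : ContDiffAt ℝ 2 F e) (hhom : ∀ r : ℝ, 0 < r → ∀ v, F (r • v) = r * F v) :
    fderiv ℝ F e e = F e ∧ ∀ u, fderiv ℝ (fderiv ℝ F) e u e = 0 := by
  have hdiff : ∀ᶠ y in 𝓝 e, DifferentiableAt ℝ F y :=
    (hF.eventually (by simp)).mono fun y hy => hy.differentiableAt (by simp)
  have h2 : DifferentiableAt ℝ (fderiv ℝ F) e :=
    (hF.fderiv_right (m := 1) (by norm_num)).differentiableAt (by simp)
  have heuler : ∀ᶠ y in 𝓝 e, fderiv ℝ F y y = F y := by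
    filter_upwards [hdiff] with y hy
    have hl : HasDerivAt (fun r : ℝ => r • y) y 1 := by
      simpa using (hasDerivAt_id (1 : ℝ)).smul_const y
    have hy' : HasFDerivAt F (fderiv ℝ F y) ((1 : ℝ) • y) := by simpa using hy.hasFDerivAt
    have h1 : HasDerivAt (fun r : ℝ => F (r • y)) (fderiv ℝ F y y) 1 :=
      hy'.comp_hasDerivAt (1 : ℝ) hl
    have h3 : HasDerivAt (fun r : ℝ => r * F y) (F y) 1 := by
      simpa using (hasDerivAt_id (1 : ℝ)).mul_const (F y)
    have hev : (fun r : ℝ => F (r • y)) =ᶠ[𝓝 1] fun r => r * F y := by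
      filter_upwards [lt_mem_nhds (zero_lt_one (α := ℝ))] with r hr using hhom r hr y
    exact (h1.congr_of_eventuallyEq hev.symm).unique h3
  refine ⟨heuler.self_of_nhds, fun u => ?_⟩
  have h3 := h2.hasFDerivAt.clm_apply (hasFDerivAt_id e)
  have h4 := (h3.congr_of_eventuallyEq (EventuallyEq.symm heuler)).unique
    hdiff.self_of_nhds.hasFDerivAt
  have h5 := congrArg (fun T => T u) h4
  simpa using h5

/-- The value at `(0, 1)` of the Hilbert metric based at `(0, t)`, and its horizontal Hessian,
which is independent of `t`. -/
lemma hilbert_value_and_hessian {E : Type*} [NormedAddCommGroup E] [NormedSpace ℝ E]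
    {D : Set (E × ℝ)}
    (hbdd : Bornology.IsBounded D) (hconv : Convex ℝ D) (hopen : IsOpen D)
    {U : Set E} (hU : IsOpen U) (hU0 : (0 : E) ∈ U) {h b : E → ℝ}
    (hh : ContDiffOn ℝ 2 h U) (hb : ContDiffOn ℝ 2 b U)
    (hgraphTop : ∀ z ∈ U, (z, h z) ∈ frontier D)
    (hgraphBot : ∀ z ∈ U, (z, b z) ∈ frontier D)
    (hbetween : ∀ z ∈ U, ∀ t : ℝ, (z, t) ∈ D → b z < t ∧ t < h z)
    {t : ℝ} (ht : ((0 : E), t) ∈ D) {F : E × ℝ → ℝ}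
    (hF : ∀ v, F v = (gauge ((· - ((0 : E), t)) '' D) v
      + gauge ((· - ((0 : E), t)) '' D) (-v)) / 2)
    (hF2 : ContDiffAt ℝ 2 F ((0 : E), (1 : ℝ))) (w : E) :
    F (0, 1) = (1 / (h 0 - t) + 1 / (t - b 0)) / 2 ∧
    fderiv ℝ (fderiv ℝ F) ((0 : E), (1 : ℝ)) (w, 0) (w, 0) =
      (fderiv ℝ (fderiv ℝ b) 0 w w - fderiv ℝ (fderiv ℝ h) 0 w w) / 2 := by
  have hU' := hU.mem_nhds hU0
  obtain ⟨cA, pA, eA⟩ := gauge_graph_eq hbdd hconv hopen ht hU hU0 hgraphTop (Or.inl rfl)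
    (fun z hz hzD => by linarith [(hbetween z hz t hzD).2]) w
  obtain ⟨cB, pB, eB⟩ := gauge_graph_eq hbdd hconv hopen ht hU hU0 hgraphBot (Or.inr rfl)
    (fun z hz hzD => by linarith [(hbetween z hz t hzD).1]) (-w)
  obtain ⟨hbt, hht⟩ := hbetween 0 hU0 t ht
  set A : ℝ → ℝ := fun ε => gauge ((· - ((0 : E), t)) '' D) (ε • w, 1) with hA
  set B : ℝ → ℝ := fun ε => gauge ((· - ((0 : E), t)) '' D) (ε • (-w), -1) with hB
  have hFAB : ∀ ε : ℝ, F ((0, 1) + ε • (w, 0)) = (A ε + B ε) / 2 := by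
    intro ε; rw [hF]; simp [hA, hB]
  have hF0 : F (0, 1) = (A 0 + B 0) / 2 := by simpa using hFAB 0
  have xA := implicit_expansion (φ := fun x => h (x • w)) (A := A) (t := t)
    (c₁ := fderiv ℝ h 0 w) (c₂ := fderiv ℝ (fderiv ℝ h) 0 w w)
    (by simpa using peano_two (hh.contDiffAt hU') w) cA pA eA
  have xB := implicit_expansion (φ := fun x => -b (x • (-w))) (A := B) (t := -t)
    (c₁ := fderiv ℝ b 0 w) (c₂ := -fderiv ℝ (fderiv ℝ b) 0 w w)
    (by
      refine (peano_two (hb.contDiffAt hU') (-w)).neg_left.congr_left fun ε => ?_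
      simp; ring) cB pB (by
      filter_upwards [eB] with ε he
      simp only [hB]
      linarith)
  have xF := peano_two hF2 (w, (0 : ℝ))
  refine ⟨?_, ?_⟩
  · have h1 : 1 + t * A 0 = A 0 * h 0 := by simpa [hA] using eA.self_of_nhds
    have h2 : -1 + t * B 0 = B 0 * b 0 := by simpa [hB] using eB.self_of_nhds
    have h3 : A 0 = 1 / (h 0 - t) := by
      rw [eq_div_iff (by linarith)]; linarith
    have h4 : B 0 = 1 / (t - b 0) := by
      rw [eq_div_iff (by linarith)]; linarith
    rw [hF0, h3, h4]
  · set H := fderiv ℝ (fderiv ℝ F) ((0 : E), (1 : ℝ)) (w, 0) (w, 0)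
    set Hh := fderiv ℝ (fderiv ℝ h) 0 w w
    set Hb := fderiv ℝ (fderiv ℝ b) 0 w w
    have hsum := ((xA.add xB).const_mul_left (1 / 2)).sub xF
    have := coeff_eq_zero (b := fderiv ℝ F (0, 1) (w, 0)
        + (fderiv ℝ h 0 w * A 0 + fderiv ℝ b 0 w * B 0) / 2)
      (c := H / 2 + (Hh - Hb) / 4) (hsum.congr_left fun ε => by
        rw [hFAB, hF0]; ring)
    linarith

/-- Symmetric bilinear forms with the same quadratic form agree. -/
lemma bilin_ext {V : Type*} [NormedAddCommGroup V] [NormedSpace ℝ V] {S T : V →L[ℝ] V →L[ℝ] ℝ}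
    (hS : ∀ u v, S u v = S v u) (hT : ∀ u v, T u v = T v u) (h : ∀ u, S u u = T u u) (u v : V) :
    S u v = T u v := by
  have h1 := h (u + v)
  simp only [map_add, add_apply] at h1
  linarith [h u, h v, hS u v, hT u v]

/-- With `f(t) = (1/(p-t) + 1/(t-q)) / 2`, one has
`log f = log ((p-q)/2) - log (p-t) - log (t-q)`, which is differentiated twice. -/
lemma weight_calculus {Ψ : ℝ → ℝ} {m p q C : ℝ} (hp : 0 < p) (hq : q < 0)
    (hΨ : ∀ᶠ t in 𝓝 0, Ψ t = m * Real.log ((1 / (p - t) + 1 / (t - q)) / 2) + C) :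
    (∀ᶠ t in 𝓝 (0 : ℝ), DifferentiableAt ℝ Ψ t) ∧
      HasDerivAt (deriv Ψ) (m * (1 / p ^ 2 + 1 / q ^ 2)) 0 := by
  have hd : ∀ᶠ t in 𝓝 (0 : ℝ), HasDerivAt Ψ (m * ((p - t)⁻¹ - (t - q)⁻¹)) t := by
    filter_upwards [hΨ.eventually_nhds, lt_mem_nhds hq, gt_mem_nhds hp] with t ht htq htp
    have hev : Ψ =ᶠ[𝓝 t] fun s => m * (Real.log ((p - q) / 2) - Real.log (p - s)
        - Real.log (s - q)) + C := by
      filter_upwards [ht, lt_mem_nhds htq, gt_mem_nhds htp] with s hs hsq hsp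
      have h1 : p - s ≠ 0 := by linarith
      have h2 : s - q ≠ 0 := by linarith
      have h3 : (p - q) / 2 ≠ 0 := by linarith
      have e : (1 / (p - s) + 1 / (s - q)) / 2 = (p - q) / 2 / (p - s) / (s - q) := by
        field_simp; ring
      rw [hs, e, Real.log_div (div_ne_zero h3 h1) h2, Real.log_div h3 h1]
    refine HasDerivAt.congr_of_eventuallyEq ?_ hev
    have d1 := ((hasDerivAt_id t).const_sub p).log (by simp; linarith)
    have d2 := ((hasDerivAt_id t).sub_const q).log (by simp; linarith)
    have := (((d1.const_sub (Real.log ((p - q) / 2))).sub d2).const_mul m).add_const C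
    refine this.congr_deriv ?_
    simp only [id]; ring
  refine ⟨hd.mono fun t h => h.differentiableAt, ?_⟩
  have hev : deriv Ψ =ᶠ[𝓝 0] fun t => m * ((p - t)⁻¹ - (t - q)⁻¹) := hd.mono fun t h => h.deriv
  refine HasDerivAt.congr_of_eventuallyEq ?_ hev
  have d1 := ((hasDerivAt_id (0 : ℝ)).const_sub p).fun_inv (by simpa using hp.ne')
  have d2 := ((hasDerivAt_id (0 : ℝ)).sub_const q).fun_inv (by simpa using hq.ne)
  refine ((d1.sub d2).const_mul m).congr_deriv ?_
  simp only [id]; ring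

end Lemmas

/-- **second derivative of the weight function for the Hilbert metric.**
Under the normalization `∂ᵢh(0)/h(0) = ∂ᵢb(0)/b(0)`, the weight function
`Ψ(t) = (1/2) log det G(t)` of the Hilbert metric along the vertical line is twice
differentiable at `0` with `Ψ''(0) = ((n+1)/2)(1/h(0)² + 1/b(0)²)`. -/
theorem hilbert_weight_second_derivative {n : ℕ} (hn : 2 ≤ n)
    (D : Set (EuclideanSpace ℝ (Fin (n - 1)) × ℝ)) (hne : D.Nonempty)
    (hbdd : Bornology.IsBounded D) (hconv : Convex ℝ D) (hopen : IsOpen D)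
    (h0D : ((0 : EuclideanSpace ℝ (Fin (n - 1))), (0 : ℝ)) ∈ D)
    (U : Set (EuclideanSpace ℝ (Fin (n - 1)))) (hU : IsOpen U)
    (hU0 : (0 : EuclideanSpace ℝ (Fin (n - 1))) ∈ U)
    (h b : EuclideanSpace ℝ (Fin (n - 1)) → ℝ)
    (hh : ContDiffOn ℝ 2 h U) (hb : ContDiffOn ℝ 2 b U)
    (hgraphTop : ∀ z ∈ U, ((z, h z) : EuclideanSpace ℝ (Fin (n - 1)) × ℝ) ∈ frontier D)
    (hgraphBot : ∀ z ∈ U, ((z, b z) : EuclideanSpace ℝ (Fin (n - 1)) × ℝ) ∈ frontier D)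
    (hbetween : ∀ z ∈ U, ∀ t : ℝ,
      ((z, t) : EuclideanSpace ℝ (Fin (n - 1)) × ℝ) ∈ D → b z < t ∧ t < h z)
    (hnormal : ∀ i : Fin (n - 1),
      fderiv ℝ h 0 (EuclideanSpace.single i 1) / h 0
        = fderiv ℝ b 0 (EuclideanSpace.single i 1) / b 0)
    (FH : (EuclideanSpace ℝ (Fin (n - 1)) × ℝ) → (EuclideanSpace ℝ (Fin (n - 1)) × ℝ) → ℝ)
    (hFH : ∀ x v, FH x v = (gauge ((· - x) '' D) v + gauge ((· - x) '' D) (-v)) / 2)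
    (hsmooth : ∀ᶠ t in nhds (0 : ℝ), ContDiffAt ℝ 4
      (fun p : (EuclideanSpace ℝ (Fin (n - 1)) × ℝ) × (EuclideanSpace ℝ (Fin (n - 1)) × ℝ) =>
        FH p.1 p.2)
      (((0 : EuclideanSpace ℝ (Fin (n - 1))), t),
        ((0 : EuclideanSpace ℝ (Fin (n - 1))), (1 : ℝ))))
    (G : ℝ → Matrix (Fin n) (Fin n) ℝ)
    (hG : ∀ t : ℝ, ∀ i j : Fin n, G t i j =
      (1 / 2) * fderiv ℝ
        (fun v => fderiv ℝ
          (fun v' => (FH ((0 : EuclideanSpace ℝ (Fin (n - 1))), t) v') ^ 2) v (coordVec n j))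
        ((0 : EuclideanSpace ℝ (Fin (n - 1))), (1 : ℝ)) (coordVec n i))
    (hGpos : ∀ᶠ t in nhds (0 : ℝ), (G t).PosDef)
    (Ψ : ℝ → ℝ) (hΨ : ∀ t : ℝ, Ψ t = (1 / 2) * Real.log (G t).det) :
    (∀ᶠ t in nhds (0 : ℝ), DifferentiableAt ℝ Ψ t) ∧
      HasDerivAt (deriv Ψ) (((n + 1 : ℝ) / 2) * (1 / (h 0) ^ 2 + 1 / (b 0) ^ 2)) 0 := by
  set e : EuclideanSpace ℝ (Fin (n - 1)) × ℝ := (0, 1) with he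
  set F : ℝ → EuclideanSpace ℝ (Fin (n - 1)) × ℝ → ℝ := fun t => FH (0, t) with hFdef
  have hline : Continuous fun t : ℝ => ((0 : EuclideanSpace ℝ (Fin (n - 1))), t) := by fun_prop
  have hDt : ∀ᶠ t in nhds (0 : ℝ), ((0 : EuclideanSpace ℝ (Fin (n - 1))), t) ∈ D :=
    hline.continuousAt.eventually (hopen.mem_nhds h0D)
  have hC2 : ∀ᶠ t in nhds (0 : ℝ), ContDiffAt ℝ 2 (F t) e := by
    filter_upwards [hsmooth] with t ht
    have h1 : ContDiffAt ℝ 2 (fun v : EuclideanSpace ℝ (Fin (n - 1)) × ℝ =>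
        (((0 : EuclideanSpace ℝ (Fin (n - 1))), t), v)) e := by fun_prop
    have h4 : ContDiffAt ℝ 2 (fun p : (EuclideanSpace ℝ (Fin (n - 1)) × ℝ) ×
        (EuclideanSpace ℝ (Fin (n - 1)) × ℝ) => FH p.1 p.2) ((0, t), e) := ht.of_le (by norm_num)
    exact h4.comp e h1
  have hFhom : ∀ t : ℝ, ∀ r : ℝ, 0 < r → ∀ v, F t (r • v) = r * F t v := by
    intro t r hr v
    simp only [hFdef, hFH, ← smul_neg, gauge_smul_of_nonneg hr.le, smul_eq_mul]
    ring
  have hval : ∀ t, ((0 : EuclideanSpace ℝ (Fin (n - 1))), t) ∈ D → ContDiffAt ℝ 2 (F t) e → ∀ w,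
      F t (0, 1) = (1 / (h 0 - t) + 1 / (t - b 0)) / 2 ∧
      fderiv ℝ (fderiv ℝ (F t)) e (w, 0) (w, 0) =
        (fderiv ℝ (fderiv ℝ b) 0 w w - fderiv ℝ (fderiv ℝ h) 0 w w) / 2 := fun t h1 h2 w =>
    hilbert_value_and_hessian hbdd hconv hopen hU hU0 hh hb hgraphTop hgraphBot hbetween h1
      (fun v => hFH _ v) h2 w
  have hsymm : ∀ t, ContDiffAt ℝ 2 (F t) e → ∀ u v,
      fderiv ℝ (fderiv ℝ (F t)) e u v = fderiv ℝ (fderiv ℝ (F t)) e v u := fun t h2 u v =>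
    (h2.isSymmSndFDerivAt (by simp)) u v
  -- `e` lies in the kernel of the Hessian, so only the horizontal part of a vector matters.
  have hquad : ∀ t, ((0 : EuclideanSpace ℝ (Fin (n - 1))), t) ∈ D → ContDiffAt ℝ 2 (F t) e → ∀ u,
      fderiv ℝ (fderiv ℝ (F t)) e u u =
        (fderiv ℝ (fderiv ℝ b) 0 u.1 u.1 - fderiv ℝ (fderiv ℝ h) 0 u.1 u.1) / 2 := by
    intro t h1 h2 u
    have hz := (euler_homogeneous h2 (hFhom t)).2
    have hu : u = (u.1, 0) + u.2 • e := by ext <;> simp [he]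
    rw [← (hval t h1 h2 u.1).2]
    conv_lhs => rw [hu]
    simp only [map_add, map_smul, add_apply, smul_apply,
      hsymm t h2 e, hz]
    simp
  set l : Fin n := ⟨n - 1, by omega⟩ with hl
  have hcl : coordVec n l = e := by simp [coordVec, hl, he]
  set K : Matrix (Fin n) (Fin n) ℝ := Matrix.of fun i j =>
    fderiv ℝ (fderiv ℝ (F 0)) e (coordVec n i) (coordVec n j) with hK
  have hC0 := hC2.self_of_nhds
  have hz0 := (euler_homogeneous hC0 (hFhom 0)).2
  have hdet : ∀ᶠ t in nhds (0 : ℝ), (G t).det =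
      ((1 / (h 0 - t) + 1 / (t - b 0)) / 2) ^ (n + 1) * (K + Matrix.single l l 1).det ∧
      (1 / (h 0 - t) + 1 / (t - b 0)) / 2 ≠ 0 := by
    filter_upwards [hDt, hC2] with t h1 h2
    obtain ⟨hbt, hht⟩ := hbetween 0 hU0 t h1
    have hEu := (euler_homogeneous h2 (hFhom t)).1
    have hv : F t e = (1 / (h 0 - t) + 1 / (t - b 0)) / 2 := (hval t h1 h2 0).1
    have hηl : fderiv ℝ (F t) e (coordVec n l) = (1 / (h 0 - t) + 1 / (t - b 0)) / 2 := by
      rw [hcl, hEu, hv]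
    have hne : (1 / (h 0 - t) + 1 / (t - b 0)) / 2 ≠ 0 := by
      have := one_div_pos.2 (sub_pos.2 hht)
      have := one_div_pos.2 (sub_pos.2 hbt)
      positivity
    refine ⟨?_, hne⟩
    have hGt : G t = Matrix.of fun i j => fderiv ℝ (F t) e (coordVec n i) *
        fderiv ℝ (F t) e (coordVec n j) + fderiv ℝ (F t) e (coordVec n l) * K i j := by
      ext i j
      have hKK := bilin_ext (hsymm t h2) (hsymm 0 hC0)
        (fun u => (hquad t h1 h2 u).trans (hquad 0 h0D hC0 u).symm) (coordVec n i) (coordVec n j)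
      rw [hG, fderiv_fderiv_sq h2]
      simp only [hK, Matrix.of_apply, ← hKK, hcl, hEu]
      ring
    have := det_rank_one_add K (fun i => fderiv ℝ (F t) e (coordVec n i)) l
      (fun j => by simp only [hK, Matrix.of_apply, hcl]; rw [hsymm 0 hC0, hz0])
      (fun i => by simp only [hK, Matrix.of_apply, hcl, hz0]) (by rw [hηl]; exact hne)
    rw [hGt, this, hηl, Fintype.card_fin]
  have hcpos : (K + Matrix.single l l 1).det ≠ 0 := by
    intro h0
    have h1 := hGpos.self_of_nhds.det_pos
    rw [hdet.self_of_nhds.1, h0, mul_zero] at h1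
    exact lt_irrefl _ h1
  obtain ⟨hb0, hh0⟩ := hbetween 0 hU0 0 h0D
  refine weight_calculus (C := 1 / 2 * Real.log (K + Matrix.single l l 1).det) hh0 hb0 ?_
  filter_upwards [hdet] with t ⟨h1, h2⟩
  rw [hΨ, h1, Real.log_mul (pow_ne_zero _ h2) hcpos, Real.log_pow]
  push_cast
  ring
end
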